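/- For every ε₁ > 0 there exists ε₀ > 0 such that for every ε ∈ (0, ε₀) with S > 16/ε there is a constant γ_d > 0, independent of n, with P(Dⁿ) ≥ 1 − e^{−γ_d n} for all n, where Dⁿ is the event that every optimal alignment v ∈ V of X and Y satisfies N_{1>}(v)/N_1(v) ≥ 1/4 − ε₁/4. -/

import Mathlib

/-!
The event only fails if some alignment in `V` satisfies `N₁> ≤ c N₁`, where `c = 1/4 - ε₁/4`
(optimality of the alignment plays no role), and the number of such pairs of strings is estimated
by an exponential moment.

*Reduction to one alignment.* Given the alignment, flip to `0` all the skipped ones of `x` and `y`: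
the flip sets `A`, `B` satisfy `|A| + |B| ≤ ε n / 2`. In the flipped strings the aligned pairs of
ones are the pairs of `i`-th ones for `i < K`, with `K ≥ n / 4` the number of aligned pairs, so the
alignment has disappeared from the problem. If `M` counts the indices `0 < i < K` for which the
`i`-th gap of the flipped `x` is `1`, and `M>` those for which moreover the `i`-th gap of the
flipped `y` is at least `2`, then `N₁ ≤ M` and `M> ≤ N₁> + |A| + |B|`, whence
`c M - M> ≥ -ε n / 2` (`exists_flip`).

*Exponential moment.* The gaps of a uniform string are dominated by independent geometric variables
(`sum_gapWeight_le`, by induction on the length of the string). A gap of `y` is at least `2` with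
probability `1/4 > c`, so for small `lam` the mean of `exp (lam (c M - M>))` is at most
`exp (-δ (K - 1))` with `δ = ε₁² / 256` (`sum_jointWeight_le`, `mean_le`).

*Union bound.* Flipping at fixed sets `A`, `B` is a bijection of the pairs of strings, so it
preserves the uniform law. The number of admissible `(A, B)` is exponentially small compared with
`exp (δ n / 4)` once `ε` is small, and there are at most `n + 1` values of `K` (`card_bad_le`).
This settles all large `n`. For the finitely many remaining `n ≥ 1` it suffices that the event has
positive probability, and it holds vacuously when `x` has no ones.
-/

open scoped Classical
open Finset

noncomputable section

/-- Score of aligning two letters (`true` = 1, `false` = 0):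
`s(1,1) = S`, `s(0,0) = 1`, `s(1,0) = s(0,1) = 0`. -/
def letterScore (S : ℝ) (a b : Bool) : ℝ :=
  if a = true ∧ b = true then S else if a = false ∧ b = false then 1 else 0

/-- Score of the alignment `(π, ν)` of the strings `x` and `y`. -/
def alignScore (S : ℝ) {n k : ℕ} (x y : Fin n → Bool) (π ν : Fin k → Fin n) : ℝ :=
  ∑ i : Fin k, letterScore S (x (π i)) (y (ν i))

/-- The optimal alignment score of two binary strings of length `n`. -/
def optScore (S : ℝ) (n : ℕ) (x y : Fin n → Bool) : ℝ :=
  sSup {r : ℝ | ∃ (k : ℕ) (π ν : Fin k → Fin n),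
    StrictMono π ∧ StrictMono ν ∧ r = alignScore S x y π ν}

/-- The string `x`, extended by the (neutral) letter `true` outside `[0, n)`. -/
def ext {n : ℕ} (x : Fin n → Bool) : ℕ → Bool :=
  fun j => if h : j < n then x ⟨j, h⟩ else true

/-- `blockStart x ℓ i` holds iff a block of zeros of length `ℓ` of `x` starts at position `i`:
positions `i, …, i+ℓ-1` carry zeros, and they are delimited by ones (or the ends of `x`). -/
def blockStart {n : ℕ} (x : Fin n → Bool) (ℓ i : ℕ) : Prop :=
  0 < ℓ ∧ i + ℓ ≤ n ∧ (∀ j ∈ Finset.Ico i (i + ℓ), ext x j = false) ∧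
    (i = 0 ∨ ext x (i - 1) = true) ∧ ext x (i + ℓ) = true

/-- The set of starting positions of blocks of zeros of length `ℓ` in `x`. -/
def starts {n : ℕ} (x : Fin n → Bool) (ℓ : ℕ) : Finset ℕ :=
  (Finset.range n).filter fun i => blockStart x ℓ i

/-- The number of blocks of zeros of length `ℓ` in `x`. -/
def numBlocks {n : ℕ} (x : Fin n → Bool) (ℓ : ℕ) : ℕ := (starts x ℓ).card

/-- Probability of an event under a uniform random binary string of length `n`. -/
def probX (n : ℕ) (E : (Fin n → Bool) → Prop) : ℝ :=
  ((Finset.univ.filter E).card : ℝ) / 2 ^ n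

/-- Probability of an event under two independent uniform random binary strings of length `n`. -/
def probXY (n : ℕ) (E : (Fin n → Bool) → (Fin n → Bool) → Prop) : ℝ :=
  ((Finset.univ.filter (fun p : (Fin n → Bool) × (Fin n → Bool) => E p.1 p.2)).card : ℝ) / 4 ^ n

/-- Expectation of a function of a uniform random binary string of length `n`. -/
def expX (n : ℕ) (f : (Fin n → Bool) → ℝ) : ℝ := (∑ x, f x) / 2 ^ n

/-- Expectation of a function of two independent uniform random binary strings of length `n`. -/
def expXY (n : ℕ) (f : (Fin n → Bool) → (Fin n → Bool) → ℝ) : ℝ := (∑ x, ∑ y, f x y) / 4 ^ n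

/-- The string obtained from `x` by removing one zero from the block of zeros starting at `p`
and inserting one extra zero into the block of zeros starting at `q`. -/
def modifyStr {n : ℕ} (x : Fin n → Bool) (p q : ℕ) : Fin n → Bool :=
  fun i => (((List.ofFn x).eraseIdx p).insertIdx (if p < q then q - 1 else q) false).getD i false

/-- The number of ones of a binary string. -/
def numOnes {n : ℕ} (x : Fin n → Bool) : ℕ :=
  (Finset.univ.filter fun i => x i = true).card

/-- `(π, ν)` is an optimal alignment of `x` and `y`. -/
def IsOptimal (S : ℝ) {n k : ℕ} (x y : Fin n → Bool) (π ν : Fin k → Fin n) : Prop :=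
  StrictMono π ∧ StrictMono ν ∧ alignScore S x y π ν = optScore S n x y

/-- Index `i` of the alignment `(π, ν)` aligns a pair of ones of `x` and `y`. -/
def matchedPair {n k : ℕ} (x y : Fin n → Bool) (π ν : Fin k → Fin n) (i : Fin k) : Prop :=
  x (π i) = true ∧ y (ν i) = true

/-- The number of pairs of ones aligned by `(π, ν)`. -/
def numMatched {n k : ℕ} (x y : Fin n → Bool) (π ν : Fin k → Fin n) : ℕ :=
  (Finset.univ.filter (matchedPair x y π ν)).card

/-- The position in `x` of the last one of `x` matched by the alignment `(π, ν)`
(0 if there is none). -/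
def lastMatchedX {n k : ℕ} (x y : Fin n → Bool) (π ν : Fin k → Fin n) : ℕ :=
  (Finset.univ.filter (matchedPair x y π ν)).sup fun i => (π i : ℕ)

/-- The position in `y` of the last one of `y` matched by the alignment `(π, ν)`
(0 if there is none). -/
def lastMatchedY {n k : ℕ} (x y : Fin n → Bool) (π ν : Fin k → Fin n) : ℕ :=
  (Finset.univ.filter (matchedPair x y π ν)).sup fun i => (ν i : ℕ)

/-- The number of ones of `x`, counted up to the last aligned pair of ones, which do not
belong to an aligned pair of ones of `(π, ν)`. -/
def skippedOnesX {n k : ℕ} (x y : Fin n → Bool) (π ν : Fin k → Fin n) : ℕ :=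
  (Finset.univ.filter fun j : Fin n => x j = true ∧ (j : ℕ) ≤ lastMatchedX x y π ν ∧
    ∀ i : Fin k, matchedPair x y π ν i → π i ≠ j).card

/-- The number of ones of `y`, counted up to the last aligned pair of ones, which do not
belong to an aligned pair of ones of `(π, ν)`. -/
def skippedOnesY {n k : ℕ} (x y : Fin n → Bool) (π ν : Fin k → Fin n) : ℕ :=
  (Finset.univ.filter fun j : Fin n => y j = true ∧ (j : ℕ) ≤ lastMatchedY x y π ν ∧
    ∀ i : Fin k, matchedPair x y π ν i → ν i ≠ j).card

/-- The alignment `(π, ν)` (encoded by its skipped-ones tuple `v`) belongs to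
`V = ∪_{k ≥ (1/2 - ε/8)n} Vᵏ`: it aligns at least `(1/2 - ε/8)n` pairs of ones and the total
number of skipped ones is at most `ε/2` times the number of aligned pairs of ones. -/
def inV (ε : ℝ) {n k : ℕ} (x y : Fin n → Bool) (π ν : Fin k → Fin n) : Prop :=
  ((1 : ℝ) / 2 - ε / 8) * n ≤ (numMatched x y π ν : ℝ) ∧
  (skippedOnesX x y π ν + skippedOnesY x y π ν : ℝ) ≤ ε * (numMatched x y π ν : ℝ) / 2

/-- `N₁(v)`: the number of pairs of consecutive matched ones of `x` (with no skipped ones in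
between, in either string) enclosing exactly one zero of `x`, such that only zeros lie
between the corresponding matched ones of `y`. -/
def N1count {n k : ℕ} (x y : Fin n → Bool) (π ν : Fin k → Fin n) : ℕ :=
  ((Finset.univ ×ˢ Finset.univ : Finset (Fin k × Fin k)).filter fun p =>
    p.1 < p.2 ∧ matchedPair x y π ν p.1 ∧ matchedPair x y π ν p.2 ∧
    (π p.2 : ℕ) = (π p.1 : ℕ) + 2 ∧
    (∀ j : Fin n, π p.1 < j → j < π p.2 → x j = false) ∧
    (∀ j : Fin n, ν p.1 < j → j < ν p.2 → y j = false)).card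

/-- `N₁>(v)`: as `N₁(v)`, additionally requiring that the corresponding matched ones of `y`
enclose two or more zeros. -/
def N1gtCount {n k : ℕ} (x y : Fin n → Bool) (π ν : Fin k → Fin n) : ℕ :=
  ((Finset.univ ×ˢ Finset.univ : Finset (Fin k × Fin k)).filter fun p =>
    p.1 < p.2 ∧ matchedPair x y π ν p.1 ∧ matchedPair x y π ν p.2 ∧
    (π p.2 : ℕ) = (π p.1 : ℕ) + 2 ∧
    (∀ j : Fin n, π p.1 < j → j < π p.2 → x j = false) ∧
    (∀ j : Fin n, ν p.1 < j → j < ν p.2 → y j = false) ∧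
    (ν p.1 : ℕ) + 2 < (ν p.2 : ℕ)).card

/-! ### Gap sequences of a binary string -/

/-- The list of gaps of the string `y`: for each one of `y`, the number of zeros since the previous
one, or since the beginning for the first one. The first gap is increased by the offset `c`, which
stands for zeros already read; the zeros after the last one are not recorded. -/
def gaps : (n : ℕ) → (Fin n → Bool) → ℕ → List ℕ
  | 0, _, _ => []
  | n + 1, y, c =>
    if y 0 = true then c :: gaps n (fun i => y i.succ) 0 else gaps n (fun i => y i.succ) (c + 1)

/-- The product weight `∏_{i < K} f i (gᵢ)` of the first `K` entries of a gap list, set to `0` when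
there are fewer than `K` gaps. -/
def gapWeight (f : ℕ → ℕ → ℝ) (K : ℕ) (l : List ℕ) : ℝ :=
  if K ≤ l.length then ∏ i ∈ range K, f i (l.getD i 0) else 0

lemma gapWeight_cons (f : ℕ → ℕ → ℝ) (K c : ℕ) (l : List ℕ) :
    gapWeight f (K + 1) (c :: l) = f 0 c * gapWeight (fun i => f (i + 1)) K l := by
  unfold gapWeight
  by_cases h : K ≤ l.length
  · simp [h, prod_range_succ', mul_comm]
  · simp [h]

lemma sum_cons_bool (n : ℕ) (g : (Fin (n + 1) → Bool) → ℝ) :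
    ∑ y, g y = ∑ y : Fin n → Bool, g (Fin.cons true y) + ∑ y : Fin n → Bool, g (Fin.cons false y) := by
  rw [← (Fin.consEquiv (fun _ : Fin (n + 1) => Bool)).sum_comp g, Fintype.sum_prod_type]
  simp [Fin.consEquiv]

/-- The gaps of a uniform string are dominated by independent geometric variables: the expected
product weight is at most the product of the geometric means of the factors. The number `μ i c`
bounds the mean of `f i (c + G)` for `G` geometric, which is encoded in the one-letter recursion
`h`. -/
lemma sum_gapWeight_le (n : ℕ) : ∀ (K c : ℕ) (f μ : ℕ → ℕ → ℝ), (∀ i c, 0 ≤ f i c) →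
    (∀ i c, 0 ≤ μ i c) → (∀ i c, f i c + μ i (c + 1) ≤ 2 * μ i c) →
    ∑ y : Fin n → Bool, gapWeight f (K + 1) (gaps n y c) ≤
      2 ^ n * (μ 0 c * ∏ i ∈ range K, μ (i + 1) 0) := by
  induction n with
  | zero =>
    intro K c f μ hf hμ h
    have : 0 ≤ μ 0 c * ∏ i ∈ range K, μ (i + 1) 0 :=
      mul_nonneg (hμ _ _) (prod_nonneg fun i _ => hμ _ _)
    simpa [gapWeight, gaps] using this
  | succ n ih =>
    intro K c f μ hf hμ h
    rw [sum_cons_bool]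
    simp only [gaps, Fin.cons_zero, Fin.cons_succ, if_true, Bool.false_eq_true, if_false,
      gapWeight_cons, ← mul_sum]
    have h1 := ih K (c + 1) f μ hf hμ h
    have h2 : ∑ y : Fin n → Bool, gapWeight (fun i => f (i + 1)) K (gaps n y 0) ≤
        2 ^ n * ∏ i ∈ range K, μ (i + 1) 0 := by
      cases K with
      | zero => simp [gapWeight]
      | succ K =>
        refine (ih K 0 (fun i => f (i + 1)) (fun i => μ (i + 1)) (fun i => hf _) (fun i => hμ _)
          (fun i => h _)).trans (le_of_eq ?_)
        rw [prod_range_succ']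
        ring
    have h3 := mul_le_mul_of_nonneg_left h2 (hf 0 c)
    have h4 : 0 ≤ (2 : ℝ) ^ n * ∏ i ∈ range K, μ (i + 1) 0 :=
      mul_nonneg (by positivity) (prod_nonneg fun i _ => hμ _ _)
    have h5 := mul_le_mul_of_nonneg_right (h 0 c) h4
    calc _ ≤ _ := add_le_add h3 h1
      _ = (f 0 c + μ 0 (c + 1)) * (2 ^ n * ∏ i ∈ range K, μ (i + 1) 0) := by ring
      _ ≤ _ := h5
      _ = _ := by ring

/-- If `p 0 < ⋯ < p (K - 1)` are the first `K` ones of `y`, then the gap list of `y` starts with the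
differences of the `p i`. -/
lemma gaps_eq (n : ℕ) : ∀ (y : Fin n → Bool) (c K : ℕ) (p : ℕ → ℕ),
    (∀ i j, i < j → j < K → p i < p j) → (∀ i < K, p i < n) →
    (∀ j : Fin n, (∃ i < K, (j : ℕ) ≤ p i) → (y j = true ↔ ∃ i < K, p i = j)) →
    K ≤ (gaps n y c).length ∧
      ∀ i < K, (gaps n y c).getD i 0 = if i = 0 then c + p 0 else p i - p (i - 1) - 1 := by
  induction n with
  | zero =>
    intro y c K p hp hn hy
    have : K = 0 := by
      by_contra h
      exact absurd (hn 0 (by omega)) (by omega)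
    subst this
    simp
  | succ n ih =>
    intro y c K p hp hn hy
    rcases Nat.eq_zero_or_pos K with rfl | hK
    · simp
    have hle : ∀ i < K, p 0 ≤ p i := by
      intro i hi
      rcases Nat.eq_zero_or_pos i with rfl | h
      · exact le_rfl
      · exact (hp 0 i h hi).le
    have h0 := hy 0 ⟨0, hK, by simp⟩
    by_cases hy0 : y 0 = true
    · obtain ⟨i, hi, hpi⟩ := h0.1 hy0
      have hp0 : p 0 = 0 := by have := hle i hi; simp at hpi; omega
      have hpos : ∀ i, i + 1 < K → 0 < p (i + 1) := fun i hi => by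
        have := hp 0 (i + 1) (by omega) hi; omega
      obtain ⟨h1, h2⟩ := ih (fun i => y i.succ) 0 (K - 1) (fun i => p (i + 1) - 1)
        (fun i j hij hj => by
          have := hp (i + 1) (j + 1) (by omega) (by omega)
          have := hpos i (by omega)
          show p (i + 1) - 1 < p (j + 1) - 1
          omega)
        (fun i hi => by
          have := hn (i + 1) (by omega)
          have := hpos i (by omega)
          show p (i + 1) - 1 < n
          omega)
        (by
          rintro j ⟨i, hi, hji⟩
          have hpi := hpos i (by omega)
          rw [hy j.succ ⟨i + 1, by omega, by simp only [Fin.val_succ]; omega⟩]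
          constructor
          · rintro ⟨i', hi', h⟩
            simp only [Fin.val_succ] at h
            rcases i' with _ | i'
            · omega
            · exact ⟨i', by omega, by show p (i' + 1) - 1 = j; omega⟩
          · rintro ⟨i', hi', h⟩
            have := hpos i' (by omega)
            refine ⟨i' + 1, by omega, ?_⟩
            simp only [Fin.val_succ]
            omega)
      simp only [gaps, hy0, if_true]
      refine ⟨by simp only [List.length_cons]; omega, ?_⟩
      intro i hi
      rcases i with _ | i
      · simp [hp0]
      · simp only [List.getD_cons_succ, Nat.add_sub_cancel]
        rw [h2 i (by omega)]
        rcases i with _ | i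
        · simp [hp0]
        · have := hp (i + 1) (i + 2) (by omega) hi
          have := hpos i (by omega)
          simp only [Nat.add_sub_cancel, Nat.add_eq_zero_iff, one_ne_zero, and_false, if_false]
          omega
    · have hpos : ∀ i < K, 0 < p i := by
        intro i hi
        rcases Nat.eq_zero_or_pos (p i) with h | h
        · exact absurd (h0.2 ⟨i, hi, by simp [h]⟩) hy0
        · exact h
      obtain ⟨h1, h2⟩ := ih (fun i => y i.succ) (c + 1) K (fun i => p i - 1)
        (fun i j hij hj => by
          have := hp i j hij hj
          have := hpos i (by omega)
          show p i - 1 < p j - 1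
          omega)
        (fun i hi => by
          have := hn i hi
          have := hpos i hi
          show p i - 1 < n
          omega)
        (by
          rintro j ⟨i, hi, hji⟩
          have hpi := hpos i (by omega)
          rw [hy j.succ ⟨i, hi, by simp only [Fin.val_succ]; omega⟩]
          refine exists_congr fun i' => and_congr_right fun hi' => ?_
          have := hpos i' hi'
          simp only [Fin.val_succ]
          omega)
      simp only [gaps, hy0]
      refine ⟨by simpa using h1, ?_⟩
      intro i hi
      have h3 := h2 i hi
      simp only [Bool.false_eq_true, if_false] at h3 ⊢
      rw [h3]
      have := hpos 0 hK
      split_ifs with hi0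
      · omega
      · have := hpos (i - 1) (by omega)
        omega

/-! ### The exponential moment -/

/-- The factor attached to a gap `a` of `x` and the gap `b` of `y` with the same index `i`: it is
`v` or `u` when `a = 1`, according to whether `b ≥ 2` or not, and `1` when `a ≠ 1`. The index `0`,
which is not a gap between two ones, carries no weight. -/
def pairFactor (u v : ℝ) (g : List ℕ) (i b : ℕ) : ℝ :=
  if i = 0 then 1 else if g.getD i 0 = 1 then if 2 ≤ b then v else u else 1

/-- The product of the factors `pairFactor` over the first `K` gaps of `x` and `y`, set to `0`
unless both strings have at least `K` ones. -/
def jointWeight (u v : ℝ) (K : ℕ) {n : ℕ} (x y : Fin n → Bool) : ℝ :=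
  if K ≤ (gaps n x 0).length then gapWeight (pairFactor u v (gaps n x 0)) K (gaps n y 0) else 0

lemma jointWeight_nonneg {u v : ℝ} (hu : 0 ≤ u) (hv : 0 ≤ v) (K : ℕ) {n : ℕ}
    (x y : Fin n → Bool) : 0 ≤ jointWeight u v K x y := by
  unfold jointWeight gapWeight
  split_ifs
  · refine prod_nonneg fun i _ => ?_
    unfold pairFactor
    split_ifs <;> first | assumption | norm_num
  · exact le_rfl
  · exact le_rfl

/-- With `r = (3u + v)/4` the mean factor given that the gap of `x` equals `1`, each index `i ≥ 1`
contributes the mean factor `(3 + r)/4`. -/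
lemma sum_jointWeight_le {u v : ℝ} (hu : 0 ≤ u) (hv : 0 ≤ v) (K n : ℕ) :
    ∑ x : Fin n → Bool, ∑ y : Fin n → Bool, jointWeight u v (K + 1) x y ≤
      4 ^ n * ((3 + (3 * u + v) / 4) / 4) ^ K := by
  set r : ℝ := (3 * u + v) / 4 with hr
  have hr0 : 0 ≤ r := by positivity
  set φ : ℕ → ℕ → ℝ := fun i a => if i = 0 then 1 else if a = 1 then r else 1 with hφ
  have hin : ∀ x : Fin n → Bool, ∑ y : Fin n → Bool, jointWeight u v (K + 1) x y ≤
      2 ^ n * gapWeight φ (K + 1) (gaps n x 0) := by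
    intro x
    unfold jointWeight
    by_cases hx : K + 1 ≤ (gaps n x 0).length
    · simp only [hx, if_true]
      refine (sum_gapWeight_le n K 0 (pairFactor u v (gaps n x 0))
        (fun i b => if i = 0 then 1 else if (gaps n x 0).getD i 0 = 1 then
          (if b = 0 then r else if b = 1 then (u + v) / 2 else v) else 1) ?_ ?_ ?_).trans
        (le_of_eq ?_)
      · intro i c
        unfold pairFactor
        split_ifs <;> first | assumption | norm_num
      · intro i c
        split_ifs <;> positivity
      · intro i c
        unfold pairFactor
        by_cases hi : i = 0
        · simp [hi]; norm_num
        by_cases hg : (gaps n x 0).getD i 0 = 1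
        · simp only [hi, hg, if_true, if_false]
          rcases c with _ | _ | c
          · norm_num; rw [hr]; linarith
          · norm_num; linarith
          · norm_num; linarith
        · simp only [hi, hg, if_false]; norm_num
      · congr 1
        simp only [gapWeight, hx, if_true, prod_range_succ', hφ]
        simp
    · simp [gapWeight, hx]
  have hout : ∑ x : Fin n → Bool, gapWeight φ (K + 1) (gaps n x 0) ≤
      2 ^ n * ((3 + r) / 4) ^ K := by
    refine (sum_gapWeight_le n K 0 φ
      (fun i a => if i = 0 then 1 else
        if a = 0 then (3 + r) / 4 else if a = 1 then (r + 1) / 2 else 1) ?_ ?_ ?_).trans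
      (le_of_eq ?_)
    · intro i c
      simp only [hφ]
      split_ifs <;> first | assumption | norm_num
    · intro i c
      split_ifs <;> positivity
    · intro i c
      simp only [hφ]
      by_cases hi : i = 0
      · simp [hi]; norm_num
      simp only [hi, if_false]
      rcases c with _ | _ | c
      · norm_num; linarith
      · norm_num; linarith
      · norm_num
    · simp [div_pow]
  calc _ ≤ ∑ x : Fin n → Bool, 2 ^ n * gapWeight φ (K + 1) (gaps n x 0) :=
        sum_le_sum fun x _ => hin x
    _ ≤ 2 ^ n * (2 ^ n * ((3 + r) / 4) ^ K) := by
        rw [← mul_sum]; gcongr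
    _ = _ := by
        rw [← mul_assoc, ← mul_pow]; norm_num

/-! ### From an alignment to gap sequences -/

/-- The string `x` with the letters at the positions in `A` flipped. -/
def flipOn {n : ℕ} (A : Finset (Fin n)) (x : Fin n → Bool) : Fin n → Bool :=
  fun j => if j ∈ A then !(x j) else x j

lemma flipOn_involutive {n : ℕ} (A : Finset (Fin n)) : Function.Involutive (flipOn A) := by
  intro x
  funext j
  by_cases h : j ∈ A <;> simp [flipOn, h]

/-- Flipping the skipped ones to zeros leaves only matched ones up to the last matched one. -/
lemma flipOn_skipped_iff {n k : ℕ} (x : Fin n → Bool) (I : Finset (Fin k)) (π : Fin k → Fin n)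
    (hI : ∀ i ∈ I, x (π i) = true) (j : Fin n) (hj : ∃ i ∈ I, j ≤ π i) :
    flipOn (univ.filter fun j : Fin n => x j = true ∧ (j : ℕ) ≤ (I.sup fun i => (π i : ℕ)) ∧
      ∀ i ∈ I, π i ≠ j) x j = true ↔ ∃ i ∈ I, π i = j := by
  have hL : (j : ℕ) ≤ I.sup fun i => (π i : ℕ) := by
    obtain ⟨i, hi, hji⟩ := hj
    exact le_trans (show (j : ℕ) ≤ (π i : ℕ) from hji) (le_sup (f := fun i => (π i : ℕ)) hi)
  unfold flipOn
  simp only [mem_filter, mem_univ, true_and, hL]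
  constructor
  · intro h
    by_contra hne
    by_cases hx : x j = true
    · have hne' : ∀ i ∈ I, π i ≠ j := fun i hi h => hne ⟨i, hi, h⟩
      rw [if_pos ⟨hx, hne'⟩, hx] at h
      exact absurd h (by simp)
    · simp [hx] at h
  · rintro ⟨i, hi, rfl⟩
    have : ¬ ∀ i' ∈ I, π i' ≠ π i := fun h => h i hi rfl
    simp [this, hI i hi]

/-- The intervals between consecutive values of an increasing sequence are disjoint, so a set `B`
meets at most `|B|` of them. -/
lemma card_le_of_meets {n K : ℕ} (T : Finset ℕ) (B : Finset (Fin n)) (q : ℕ → ℕ)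
    (hq : ∀ i j, i < j → j < K → q i < q j)
    (h : ∀ i ∈ T, 0 < i ∧ i < K ∧ ∃ j ∈ B, q (i - 1) < (j : ℕ) ∧ (j : ℕ) < q i) :
    T.card ≤ B.card := by
  rcases T.eq_empty_or_nonempty with rfl | ⟨i₀, hi₀⟩
  · simp
  have : Nonempty (Fin n) := let ⟨_, _, j, _⟩ := h i₀ hi₀; ⟨j⟩
  choose! h0 hK s hsB hs1 hs2 using h
  have hle : ∀ i j, i ≤ j → j < K → q i ≤ q j := by
    intro i j hij hj
    rcases hij.eq_or_lt with rfl | h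
    · exact le_rfl
    · exact (hq i j h hj).le
  have hlt : ∀ a ∈ T, ∀ b ∈ T, a < b → (s a : ℕ) < s b := by
    intro a ha b hb hab
    have := hs2 a ha
    have := hs1 b hb
    have := hle a (b - 1) (by omega) (by have := hK b hb; omega)
    omega
  refine card_le_card_of_injOn s hsB ?_
  intro a ha b hb hab
  rcases lt_trichotomy a b with h | h | h
  · have := hlt a ha b hb h; rw [hab] at this; omega
  · exact h
  · have := hlt b hb a ha h; rw [hab] at this; omega

/-- An alignment for which `N₁>` is at most `c N₁` forces a large weight on the strings obtained by
flipping its skipped ones. In the flipped strings the `i`-th matched pair of ones is the pair of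
`i`-th ones. The flip creates no more than one new pair of gaps per flipped letter and destroys
none, so the exponent `c M - M>` of the weight is at least `c N₁ - N₁>` minus the number of
flips. -/
lemma exists_flip (c lam : ℝ) (hc : 0 ≤ c) (hlam : 0 ≤ lam) {n k : ℕ} (x y : Fin n → Bool)
    (π ν : Fin k → Fin n) (hπ : StrictMono π) (hν : StrictMono ν)
    (hN : (N1gtCount x y π ν : ℝ) ≤ c * (N1count x y π ν : ℝ)) :
    ∃ A B : Finset (Fin n), A.card = skippedOnesX x y π ν ∧ B.card = skippedOnesY x y π ν ∧
      Real.exp (-(lam * (A.card + B.card))) ≤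
        jointWeight (Real.exp (lam * c)) (Real.exp (lam * (c - 1))) (numMatched x y π ν)
          (flipOn A x) (flipOn B y) := by
  set I : Finset (Fin k) := univ.filter (matchedPair x y π ν) with hI
  have hmI : ∀ i, i ∈ I ↔ matchedPair x y π ν i := by simp [hI]
  set A : Finset (Fin n) := univ.filter fun j : Fin n => x j = true ∧
    (j : ℕ) ≤ (I.sup fun i => (π i : ℕ)) ∧ ∀ i ∈ I, π i ≠ j with hA
  set B : Finset (Fin n) := univ.filter fun j : Fin n => y j = true ∧
    (j : ℕ) ≤ (I.sup fun i => (ν i : ℕ)) ∧ ∀ i ∈ I, ν i ≠ j with hB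
  set K : ℕ := numMatched x y π ν with hK
  have hKI : I.card = K := rfl
  refine ⟨A, B, ?_, ?_, ?_⟩
  · simp only [hA, hmI]; rfl
  · simp only [hB, hmI]; rfl
  -- `e i` is the index in the alignment of the `i`-th aligned pair of ones
  let e : Fin K ↪o Fin k := I.orderEmbOfFin hKI
  have heI : ∀ i, e i ∈ I := fun i => I.orderEmbOfFin_mem hKI i
  have hsurj : ∀ a ∈ I, ∃ i, e i = a := by
    intro a ha
    have : a ∈ Set.range e := by
      rw [show Set.range e = (I : Set (Fin k)) from I.range_orderEmbOfFin hKI]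
      exact ha
    exact this
  let p : ℕ → ℕ := fun i => if h : i < K then (π (e ⟨i, h⟩) : ℕ) else 0
  let q : ℕ → ℕ := fun i => if h : i < K then (ν (e ⟨i, h⟩) : ℕ) else 0
  have pe : ∀ i (h : i < K), p i = (π (e ⟨i, h⟩) : ℕ) := fun i h => by simp [p, h]
  have qe : ∀ i (h : i < K), q i = (ν (e ⟨i, h⟩) : ℕ) := fun i h => by simp [q, h]
  have hp : ∀ i j, i < j → j < K → p i < p j := by
    intro i j hij hj
    rw [pe i (hij.trans hj), pe j hj]
    exact hπ (e.strictMono (by simpa using hij))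
  have hq : ∀ i j, i < j → j < K → q i < q j := by
    intro i j hij hj
    rw [qe i (hij.trans hj), qe j hj]
    exact hν (e.strictMono (by simpa using hij))
  obtain ⟨hxl, hxg⟩ := gaps_eq n (flipOn A x) 0 K p hp
    (fun i hi => by rw [pe i hi]; exact (π _).2)
    (by
      rintro j ⟨i, hi, hji⟩
      rw [pe i hi] at hji
      rw [flipOn_skipped_iff x I π (fun i hi => ((hmI i).1 hi).1) j ⟨_, heI _, hji⟩]
      constructor
      · rintro ⟨a, ha, rfl⟩
        obtain ⟨i', rfl⟩ := hsurj a ha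
        exact ⟨i', i'.2, by rw [pe i' i'.2]⟩
      · rintro ⟨i', hi', h⟩
        rw [pe i' hi'] at h
        exact ⟨_, heI ⟨i', hi'⟩, Fin.ext h⟩)
  obtain ⟨hyl, hyg⟩ := gaps_eq n (flipOn B y) 0 K q hq
    (fun i hi => by rw [qe i hi]; exact (ν _).2)
    (by
      rintro j ⟨i, hi, hji⟩
      rw [qe i hi] at hji
      rw [flipOn_skipped_iff y I ν (fun i hi => ((hmI i).1 hi).2) j ⟨_, heI _, hji⟩]
      constructor
      · rintro ⟨a, ha, rfl⟩
        obtain ⟨i', rfl⟩ := hsurj a ha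
        exact ⟨i', i'.2, by rw [qe i' i'.2]⟩
      · rintro ⟨i', hi', h⟩
        rw [qe i' hi'] at h
        exact ⟨_, heI ⟨i', hi'⟩, Fin.ext h⟩)
  set M : Finset ℕ := (range K).filter fun i => 0 < i ∧ p i = p (i - 1) + 2 with hM
  set M' : Finset ℕ := (range K).filter fun i =>
    (0 < i ∧ p i = p (i - 1) + 2) ∧ q (i - 1) + 2 < q i with hM'
  have hweight : jointWeight (Real.exp (lam * c)) (Real.exp (lam * (c - 1))) K
      (flipOn A x) (flipOn B y) = Real.exp (lam * (c * M.card - M'.card)) := by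
    unfold jointWeight gapWeight
    rw [if_pos hxl, if_pos hyl]
    have hsum : lam * (c * M.card - M'.card) = ∑ i ∈ range K,
        lam * (c * (if 0 < i ∧ p i = p (i - 1) + 2 then 1 else 0) -
          (if (0 < i ∧ p i = p (i - 1) + 2) ∧ q (i - 1) + 2 < q i then 1 else 0)) := by
      rw [← mul_sum, sum_sub_distrib, ← mul_sum, sum_boole, sum_boole]
    rw [hsum, Real.exp_sum]
    refine prod_congr rfl fun i hi => ?_
    have hi := mem_range.1 hi
    unfold pairFactor
    rw [hxg i hi, hyg i hi]
    by_cases h0 : i = 0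
    · simp [h0]
    have h0' : 0 < i := Nat.pos_of_ne_zero h0
    have h1 := hp (i - 1) i (by omega) hi
    have h2 := hq (i - 1) i (by omega) hi
    have e1 : (p i - p (i - 1) - 1 = 1) ↔ p i = p (i - 1) + 2 := by omega
    have e2 : (2 ≤ q i - q (i - 1) - 1) ↔ q (i - 1) + 2 < q i := by omega
    simp only [h0, if_false, h0', true_and, e1, e2]
    by_cases h3 : p i = p (i - 1) + 2 <;> by_cases h4 : q (i - 1) + 2 < q i <;> simp [h3, h4]
  rw [hweight]
  -- no pair counted by `N₁` is lost
  have hN1 : N1count x y π ν ≤ M.card := by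
    unfold N1count
    refine (card_le_card_of_injOn (t := M.attach.image fun i =>
      (e ⟨i.1 - 1, by have := mem_range.1 (mem_filter.1 i.2).1; omega⟩,
        e ⟨i.1, mem_range.1 (mem_filter.1 i.2).1⟩)) id ?_ Function.injective_id.injOn).trans
      (card_image_le.trans (card_attach (s := M)).le)
    rintro ⟨a, b⟩ hab
    simp only [mem_coe, mem_filter, mem_product, mem_univ, true_and] at hab
    obtain ⟨hlt, ha, hb, h2, hx, hy⟩ := hab
    obtain ⟨i, rfl⟩ := hsurj a ((hmI a).2 ha)
    obtain ⟨j, rfl⟩ := hsurj b ((hmI b).2 hb)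
    have hij : (i : ℕ) < j := e.lt_iff_lt.1 hlt
    have hij1 : (i : ℕ) = j - 1 := by
      by_contra hne
      have hm := (hmI _).1 (heI ⟨(j : ℕ) - 1, by omega⟩)
      have := hx (π (e ⟨(j : ℕ) - 1, by omega⟩))
        (hπ (e.strictMono (show (i : ℕ) < (j : ℕ) - 1 by omega)))
        (hπ (e.strictMono (show (j : ℕ) - 1 < j by omega)))
      rw [hm.1] at this
      exact absurd this (by simp)
    have hpj : p j = p (j - 1) + 2 := by
      rw [← hij1, pe j j.2, pe i i.2]
      exact h2
    simp only [mem_coe, mem_image, mem_attach, true_and, Subtype.exists, id]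
    refine ⟨j, mem_filter.2 ⟨mem_range.2 j.2, by omega, hpj⟩, ?_⟩
    simp only [← hij1]
  -- a pair of gaps counted by `M'` but not by `N₁>` contains a flipped letter
  have hN1gt : M'.card ≤ N1gtCount x y π ν + A.card + B.card := by
    set TA := M'.filter fun i => ∃ j ∈ A, p (i - 1) < (j : ℕ) ∧ (j : ℕ) < p i with hTA
    set TB := M'.filter fun i => ∃ j ∈ B, q (i - 1) < (j : ℕ) ∧ (j : ℕ) < q i with hTB
    have cA : TA.card ≤ A.card := by
      refine card_le_of_meets (K := K) TA A p hp fun i hi => ?_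
      simp only [hTA, hM', mem_filter, mem_range] at hi
      exact ⟨hi.1.2.1.1, hi.1.1, hi.2⟩
    have cB : TB.card ≤ B.card := by
      refine card_le_of_meets (K := K) TB B q hq fun i hi => ?_
      simp only [hTB, hM', mem_filter, mem_range] at hi
      exact ⟨hi.1.2.1.1, hi.1.1, hi.2⟩
    have cR : (M' \ (TA ∪ TB)).card ≤ N1gtCount x y π ν := by
      rcases Nat.eq_zero_or_pos K with h0 | h0
      · have : M' = ∅ := by simp [hM', h0]
        simp [this]
      let E : ℕ → Fin K := fun i => if h : i < K then ⟨i, h⟩ else ⟨0, h0⟩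
      have hE : ∀ i (h : i < K), E i = ⟨i, h⟩ := fun i h => by simp [E, h]
      refine card_le_card_of_injOn (fun i => (e (E (i - 1)), e (E i))) ?_ ?_
      · intro i hi
        simp only [coe_sdiff, Set.mem_sdiff, mem_coe, mem_union, not_or, hTA, hTB, mem_filter,
          not_and, not_exists] at hi
        obtain ⟨hiM, hiA, hiB⟩ := hi
        have hiA := hiA hiM
        have hiB := hiB hiM
        simp only [hM', mem_filter, mem_range] at hiM
        obtain ⟨hiK, ⟨hi0, hp2⟩, hq2⟩ := hiM
        have hK1 : i - 1 < K := by omega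
        rw [pe i hiK, pe _ hK1] at hp2 hiA
        rw [qe i hiK, qe _ hK1] at hq2 hiB
        simp only [mem_coe, mem_filter, mem_product, mem_univ, true_and, hE i hiK, hE _ hK1]
        have hlt : e ⟨i - 1, hK1⟩ < e ⟨i, hiK⟩ := e.strictMono (show i - 1 < i by omega)
        -- a one strictly between consecutive matched ones is skipped
        have hbetween : ∀ a ∈ I, ¬ (e ⟨i - 1, hK1⟩ < a ∧ a < e ⟨i, hiK⟩) := by
          rintro a ha ⟨h1, h2⟩
          obtain ⟨j, rfl⟩ := hsurj a ha
          have h1 : i - 1 < (j : ℕ) := e.lt_iff_lt.1 h1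
          have h2 : (j : ℕ) < i := e.lt_iff_lt.1 h2
          omega
        refine ⟨hlt, (hmI _).1 (heI _), (hmI _).1 (heI _), hp2, ?_, ?_, hq2⟩
        · intro j h1 h2
          by_contra hx
          refine hiA j (mem_filter.2 ⟨mem_univ _, by simpa using hx, ?_, ?_⟩) h1 h2
          · exact le_trans (show (j : ℕ) ≤ (π (e ⟨i, hiK⟩) : ℕ) from h2.le)
              (le_sup (f := fun i => (π i : ℕ)) (heI _))
          · rintro a ha rfl
            exact hbetween a ha ⟨hπ.lt_iff_lt.1 h1, hπ.lt_iff_lt.1 h2⟩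
        · intro j h1 h2
          by_contra hx
          refine hiB j (mem_filter.2 ⟨mem_univ _, by simpa using hx, ?_, ?_⟩) h1 h2
          · exact le_trans (show (j : ℕ) ≤ (ν (e ⟨i, hiK⟩) : ℕ) from h2.le)
              (le_sup (f := fun i => (ν i : ℕ)) (heI _))
          · rintro a ha rfl
            exact hbetween a ha ⟨hν.lt_iff_lt.1 h1, hν.lt_iff_lt.1 h2⟩
      · intro i hi j hj hij
        have hiK : i < K := mem_range.1 (mem_filter.1 (mem_sdiff.1 hi).1).1
        have hjK : j < K := mem_range.1 (mem_filter.1 (mem_sdiff.1 hj).1).1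
        have := e.injective (Prod.ext_iff.1 hij).2
        rw [hE i hiK, hE j hjK] at this
        simpa using this
    have c1 : M'.card ≤ (M' \ (TA ∪ TB)).card + (TA ∪ TB).card := by
      rw [← card_sdiff_add_card_inter M' (TA ∪ TB)]
      exact Nat.add_le_add_left (card_le_card inter_subset_right) _
    have c2 := card_union_le TA TB
    omega
  have h1 : (N1count x y π ν : ℝ) ≤ M.card := by exact_mod_cast hN1
  have h2 : (M'.card : ℝ) ≤ N1gtCount x y π ν + A.card + B.card := by exact_mod_cast hN1gt
  have h3 := mul_le_mul_of_nonneg_left h1 hc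
  rw [Real.exp_le_exp, ← mul_neg]
  exact mul_le_mul_of_nonneg_left (by linarith) hlam

/-! ### Counting the exceptional pairs of strings -/

lemma sum_flipOn {n : ℕ} (A : Finset (Fin n)) (g : (Fin n → Bool) → ℝ) :
    ∑ x, g (flipOn A x) = ∑ x, g x :=
  Equiv.sum_comp (flipOn_involutive A).toPerm g

lemma sum_exp_card (n : ℕ) (τ : ℝ) :
    ∑ A : Finset (Fin n), Real.exp (-(τ * A.card)) ≤ Real.exp (n * Real.exp (-τ)) := by
  have h := Fintype.sum_pow_mul_eq_add_pow (Fin n) (Real.exp (-τ)) 1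
  simp only [one_pow, mul_one, Fintype.card_fin] at h
  calc ∑ A : Finset (Fin n), Real.exp (-(τ * A.card))
      = ∑ A : Finset (Fin n), Real.exp (-τ) ^ A.card :=
        sum_congr rfl fun A _ => by rw [← Real.exp_nat_mul]; congr 1; ring
    _ = (Real.exp (-τ) + 1) ^ n := h
    _ ≤ Real.exp (Real.exp (-τ)) ^ n := by
        gcongr
        exact Real.add_one_le_exp _
    _ = _ := by rw [← Real.exp_nat_mul]

/-- Union bound over the number `K + 1` of matched pairs and over the sets `A`, `B` of flipped
positions, combined with Markov's inequality for the weight. A pair with `|A| + |B| ≤ D` is charged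
`exp (τ (D - |A| - |B|)) ≥ 1`, which makes the number of pairs at most
`exp (τ D + 2 n exp (-τ))`. -/
lemma card_bad_le {n : ℕ} (D lam τ δ u v : ℝ) (hτ : 0 ≤ τ) (hu : 0 ≤ u) (hv : 0 ≤ v) (hδ : 0 ≤ δ)
    (hρ : (3 + (3 * u + v) / 4) / 4 ≤ Real.exp (-δ))
    (Bad : Finset ((Fin n → Bool) × (Fin n → Bool)))
    (h : ∀ z ∈ Bad, ∃ K : ℕ, K ≤ n ∧ (n : ℝ) / 4 - 1 ≤ K ∧ ∃ A B : Finset (Fin n),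
      (A.card + B.card : ℝ) ≤ D ∧
      Real.exp (-(lam * D)) ≤ jointWeight u v (K + 1) (flipOn A z.1) (flipOn B z.2)) :
    (Bad.card : ℝ) ≤ 4 ^ n * ((n + 1) *
      Real.exp ((lam + τ) * D + 2 * n * Real.exp (-τ) - δ * (n / 4 - 1))) := by
  set R : Finset ℕ := (range (n + 1)).filter fun K => (n : ℝ) / 4 - 1 ≤ K with hR
  let W : (Fin n → Bool) × (Fin n → Bool) → ℕ → Finset (Fin n) → Finset (Fin n) → ℝ :=
    fun z K A B => Real.exp ((lam + τ) * D) * (Real.exp (-(τ * A.card)) *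
      (Real.exp (-(τ * B.card)) * jointWeight u v (K + 1) (flipOn A z.1) (flipOn B z.2)))
  have hW0 : ∀ z K A B, 0 ≤ W z K A B := by
    intro z K A B
    have := jointWeight_nonneg hu hv (K + 1) (flipOn A z.1) (flipOn B z.2)
    simp only [W]
    positivity
  have hone : ∀ z ∈ Bad, (1 : ℝ) ≤ ∑ K ∈ R, ∑ A, ∑ B, W z K A B := by
    intro z hz
    obtain ⟨K, hKn, hK, A, B, hAB, hw⟩ := h z hz
    have hKR : K ∈ R := mem_filter.2 ⟨mem_range.2 (by omega), hK⟩
    have h1 : (1 : ℝ) ≤ W z K A B := by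
      simp only [W]
      calc (1 : ℝ) ≤ Real.exp (τ * (D - (A.card + B.card))) :=
            Real.one_le_exp (mul_nonneg hτ (by linarith))
        _ = Real.exp ((lam + τ) * D) * (Real.exp (-(τ * A.card)) *
            (Real.exp (-(τ * B.card)) * Real.exp (-(lam * D)))) := by
            rw [← Real.exp_add, ← Real.exp_add, ← Real.exp_add]; congr 1; ring
        _ ≤ _ := by gcongr
    refine h1.trans ?_
    refine le_trans ?_ (single_le_sum (f := fun K => ∑ A, ∑ B, W z K A B)
      (fun K _ => sum_nonneg fun A _ => sum_nonneg fun B _ => hW0 z K A B) hKR)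
    refine le_trans ?_ (single_le_sum (f := fun A => ∑ B, W z K A B)
      (fun A _ => sum_nonneg fun B _ => hW0 z K A B) (mem_univ A))
    exact single_le_sum (f := fun B => W z K A B) (fun B _ => hW0 z K A B) (mem_univ B)
  have hsumz : ∀ K ∈ R, ∀ A B : Finset (Fin n),
      ∑ z : (Fin n → Bool) × (Fin n → Bool),
        jointWeight u v (K + 1) (flipOn A z.1) (flipOn B z.2) ≤
      4 ^ n * Real.exp (-(δ * (n / 4 - 1))) := by
    intro K hK A B
    have hK' : (n : ℝ) / 4 - 1 ≤ K := (mem_filter.1 hK).2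
    rw [Fintype.sum_prod_type]
    calc _ = ∑ x : Fin n → Bool, ∑ y : Fin n → Bool, jointWeight u v (K + 1) (flipOn A x) y :=
          sum_congr rfl fun x _ => sum_flipOn B fun y => jointWeight u v (K + 1) (flipOn A x) y
      _ = ∑ x : Fin n → Bool, ∑ y : Fin n → Bool, jointWeight u v (K + 1) x y :=
          sum_flipOn A fun x => ∑ y : Fin n → Bool, jointWeight u v (K + 1) x y
      _ ≤ 4 ^ n * ((3 + (3 * u + v) / 4) / 4) ^ K := sum_jointWeight_le hu hv K n
      _ ≤ 4 ^ n * Real.exp (-δ) ^ K := by gcongr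
      _ ≤ _ := by
          rw [← Real.exp_nat_mul]
          gcongr
          nlinarith
  calc (Bad.card : ℝ) = ∑ z ∈ Bad, 1 := by simp
    _ ≤ ∑ z ∈ Bad, ∑ K ∈ R, ∑ A, ∑ B, W z K A B := sum_le_sum hone
    _ ≤ ∑ z, ∑ K ∈ R, ∑ A, ∑ B, W z K A B :=
        sum_le_sum_of_subset_of_nonneg (subset_univ _) fun z _ _ =>
          sum_nonneg fun K _ => sum_nonneg fun A _ => sum_nonneg fun B _ => hW0 z K A B
    _ = ∑ K ∈ R, ∑ A, ∑ B, ∑ z, W z K A B := by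
        rw [sum_comm]
        refine sum_congr rfl fun K _ => ?_
        rw [sum_comm]
        refine sum_congr rfl fun A _ => ?_
        rw [sum_comm]
    _ ≤ ∑ K ∈ R, ∑ A : Finset (Fin n), ∑ B : Finset (Fin n), Real.exp ((lam + τ) * D) *
        (Real.exp (-(τ * A.card)) * (Real.exp (-(τ * B.card)) *
          (4 ^ n * Real.exp (-(δ * (n / 4 - 1)))))) := by
        refine sum_le_sum fun K hK => sum_le_sum fun A _ => sum_le_sum fun B _ => ?_
        simp only [W, ← mul_sum]
        gcongr
        exact hsumz K hK A B
    _ = R.card * (Real.exp ((lam + τ) * D) * ((∑ A : Finset (Fin n), Real.exp (-(τ * A.card))) *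
        ((∑ B : Finset (Fin n), Real.exp (-(τ * B.card))) *
          (4 ^ n * Real.exp (-(δ * (n / 4 - 1))))))) := by
        rw [sum_const, nsmul_eq_mul]
        simp only [← mul_sum, ← sum_mul]
    _ ≤ (n + 1) * (Real.exp ((lam + τ) * D) * (Real.exp (n * Real.exp (-τ)) *
        (Real.exp (n * Real.exp (-τ)) * (4 ^ n * Real.exp (-(δ * (n / 4 - 1))))))) := by
        have hRc : (R.card : ℝ) ≤ n + 1 := by
          have : R.card ≤ n + 1 := (card_filter_le _ _).trans (card_range _).le
          exact_mod_cast this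
        have := sum_exp_card n τ
        have h0 : 0 ≤ ∑ A : Finset (Fin n), Real.exp (-(τ * A.card)) :=
          sum_nonneg fun A _ => (Real.exp_pos _).le
        gcongr
    _ = _ := by
        rw [show (lam + τ) * D + 2 * n * Real.exp (-τ) - δ * (n / 4 - 1) =
          (lam + τ) * D + n * Real.exp (-τ) + n * Real.exp (-τ) + -(δ * (n / 4 - 1)) by ring,
          Real.exp_add, Real.exp_add, Real.exp_add]
        ring

lemma numMatched_le {n k : ℕ} (x y : Fin n → Bool) (π ν : Fin k → Fin n) (hπ : StrictMono π) :
    numMatched x y π ν ≤ n := by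
  refine (card_le_univ _).trans ?_
  simpa using Fintype.card_le_of_injective π hπ.injective

lemma probXY_eq_one_sub (n : ℕ) (E : (Fin n → Bool) → (Fin n → Bool) → Prop) :
    probXY n E = 1 - ((univ.filter fun z : (Fin n → Bool) × (Fin n → Bool) =>
      ¬ E z.1 z.2).card : ℝ) / 4 ^ n := by
  have h := card_filter_add_card_filter_not (s := (univ : Finset ((Fin n → Bool) × (Fin n → Bool))))
    (fun z => E z.1 z.2)
  have hc : (univ : Finset ((Fin n → Bool) × (Fin n → Bool))).card = 4 ^ n := by
    simp [← mul_pow]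
  rw [hc] at h
  have h' : ((univ.filter fun z : (Fin n → Bool) × (Fin n → Bool) => E z.1 z.2).card : ℝ) +
      ((univ.filter fun z : (Fin n → Bool) × (Fin n → Bool) => ¬ E z.1 z.2).card : ℝ) = 4 ^ n := by
    exact_mod_cast h
  unfold probXY
  have h4 : (0 : ℝ) < 4 ^ n := by positivity
  rw [eq_sub_iff_add_eq, ← add_div, h', div_self h4.ne']

/-- For `c = 1/4 - ε₁/4` the mean exponent `3c/4 + (c - 1)/4` is negative, so a small `lam` makes the mean
weight of a gap smaller than `1`; `lam = ε₁ / 8` minimizes the quadratic bound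
`1 - lam ε₁ / 4 + lam²` of `(3u + v)/4`. -/
lemma mean_le (ε₁ : ℝ) (h0 : 0 < ε₁) (h1 : ε₁ < 1) :
    (3 + (3 * Real.exp (ε₁ / 8 * (1 / 4 - ε₁ / 4)) +
      Real.exp (ε₁ / 8 * (1 / 4 - ε₁ / 4 - 1))) / 4) / 4 ≤ Real.exp (-(ε₁ ^ 2 / 256)) := by
  have key : ∀ s : ℝ, |s| ≤ ε₁ / 8 → Real.exp s ≤ 1 + s + (ε₁ / 8) ^ 2 := by
    intro s hs
    have h2 := (abs_le.1 (Real.abs_exp_sub_one_sub_id_le (x := s) (by linarith))).2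
    have h3 : s ^ 2 ≤ (ε₁ / 8) ^ 2 := sq_le_sq' (abs_le.1 hs).1 (abs_le.1 hs).2
    linarith
  have hu := key (ε₁ / 8 * (1 / 4 - ε₁ / 4)) (abs_le.2 ⟨by nlinarith, by nlinarith⟩)
  have hv := key (ε₁ / 8 * (1 / 4 - ε₁ / 4 - 1)) (abs_le.2 ⟨by nlinarith, by nlinarith⟩)
  have := Real.add_one_le_exp (-(ε₁ ^ 2 / 256))
  nlinarith

/-- for every `ε₁ > 0` there exists `ε₀ > 0` such that for every
`ε ∈ (0, ε₀)` with `S > 16/ε` there is a constant `γ_d > 0`, independent of `n`, with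
`P(Dⁿ) ≥ 1 - e^{-γ_d n}` for all `n`, where `Dⁿ` is the event that every optimal alignment
`v ∈ V` of `X` and `Y` satisfies `N₁>(v)/N₁(v) ≥ 1/4 - ε₁/4`. -/
theorem prob_Dn_event (ε₁ : ℝ) (hε₁ : 0 < ε₁) :
    ∃ ε₀ > (0 : ℝ), ∀ ε : ℝ, 0 < ε → ε < ε₀ → ∀ S : ℝ, 16 / ε < S →
      ∃ γd > (0 : ℝ), ∀ n : ℕ,
        1 - Real.exp (-γd * n) ≤ probXY n (fun x y =>
          ∀ (k : ℕ) (π ν : Fin k → Fin n), IsOptimal S x y π ν → inV ε x y π ν →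
            1 / 4 - ε₁ / 4 ≤ (N1gtCount x y π ν : ℝ) / (N1count x y π ν : ℝ)) := by
  rcases le_or_gt 1 ε₁ with h1 | h1
  · -- the lower bound `1/4 - ε₁/4` is not positive
    refine ⟨1, one_pos, fun ε _ _ S _ => ⟨1, one_pos, fun n => ?_⟩⟩
    rw [probXY_eq_one_sub, filter_false_of_mem]
    · have := Real.exp_pos (-1 * (n : ℝ))
      simp only [card_empty, Nat.cast_zero, zero_div, sub_zero]
      linarith
    · intro z _ h
      refine h fun k π ν _ _ => le_trans (by linarith) (div_nonneg ?_ ?_) <;> positivity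
  set c : ℝ := 1 / 4 - ε₁ / 4 with hc
  have hc0 : 0 ≤ c := by rw [hc]; linarith
  set δ : ℝ := ε₁ ^ 2 / 256 with hδ
  have hδ0 : 0 < δ := by positivity
  have hδ1 : δ < 1 := by rw [hδ]; nlinarith
  set lam : ℝ := ε₁ / 8 with hlam
  have hlam0 : 0 < lam := by positivity
  -- the cost `τ` per flip makes the entropy of the pair `(A, B)` at most `τ D + δ n / 16`
  set τ : ℝ := Real.log (32 / δ) with hτ
  have hτ0 : 0 < τ := Real.log_pos (by rw [lt_div_iff₀ hδ0]; linarith)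
  have hτe : Real.exp (-τ) = δ / 32 := by
    rw [Real.exp_neg, hτ, Real.exp_log (by positivity), inv_div]
  refine ⟨min 1 (δ / (8 * (lam + τ))), lt_min one_pos (by positivity), ?_⟩
  intro ε hε hεlt S _
  have hε1 : ε < 1 := hεlt.trans_le (min_le_left _ _)
  have hε2 : (lam + τ) * ε ≤ δ / 8 := by
    have := (hεlt.trans_le (min_le_right _ _)).le
    rw [le_div_iff₀ (by positivity)] at this
    linarith
  set N : ℕ := ⌈1024 * Real.exp δ / δ ^ 2⌉₊ + 1 with hN
  refine ⟨min (δ / 16) ((1 / 4) ^ N / N), lt_min (by positivity) (by positivity), fun n => ?_⟩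
  set γ : ℝ := min (δ / 16) ((1 / 4) ^ N / N) with hγ
  rcases Nat.eq_zero_or_pos n with rfl | hn
  · simp only [Nat.cast_zero, mul_zero, Real.exp_zero, sub_self]
    unfold probXY
    positivity
  have hnR : (1 : ℝ) ≤ n := by exact_mod_cast hn
  rcases lt_or_ge n N with hnN | hnN
  · -- the event holds vacuously when `x` has no ones
    have hmem : ((fun _ => false, fun _ => false) : (Fin n → Bool) × (Fin n → Bool)) ∈
        univ.filter (fun z : (Fin n → Bool) × (Fin n → Bool) =>
          ∀ (k : ℕ) (π ν : Fin k → Fin n), IsOptimal S z.1 z.2 π ν → inV ε z.1 z.2 π ν →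
            c ≤ (N1gtCount z.1 z.2 π ν : ℝ) / (N1count z.1 z.2 π ν : ℝ)) := by
      refine mem_filter.2 ⟨mem_univ _, fun k π ν _ hV => ?_⟩
      have h := hV.1
      have h0 : numMatched (fun _ : Fin n => false) (fun _ : Fin n => false) π ν = 0 := by
        simp [numMatched, matchedPair]
      simp only [h0, Nat.cast_zero] at h
      nlinarith
    have hcard := card_pos.2 ⟨_, hmem⟩
    have hp : (1 / 4 : ℝ) ^ n ≤ probXY n (fun x y =>
        ∀ (k : ℕ) (π ν : Fin k → Fin n), IsOptimal S x y π ν → inV ε x y π ν →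
          c ≤ (N1gtCount x y π ν : ℝ) / (N1count x y π ν : ℝ)) := by
      unfold probXY
      rw [one_div_pow]
      gcongr
      exact_mod_cast hcard
    refine le_trans ?_ hp
    have h2 := Real.add_one_le_exp (-γ * n)
    have hNpos : (0 : ℝ) < N := by rw [hN]; positivity
    have h3 : γ * n ≤ (1 / 4 : ℝ) ^ N := by
      calc γ * n ≤ (1 / 4) ^ N / N * N := by
            gcongr
            exact min_le_right _ _
        _ = _ := div_mul_cancel₀ _ hNpos.ne'
    have h4 : (1 / 4 : ℝ) ^ N ≤ (1 / 4) ^ n :=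
      pow_le_pow_of_le_one (by norm_num) (by norm_num) hnN.le
    linarith
  · rw [probXY_eq_one_sub]
    have hb := card_bad_le (n := n) (ε * n / 2) lam τ δ (Real.exp (lam * c))
      (Real.exp (lam * (c - 1))) hτ0.le (Real.exp_pos _).le (Real.exp_pos _).le hδ0.le
      (mean_le ε₁ hε₁ h1)
      (univ.filter fun z : (Fin n → Bool) × (Fin n → Bool) =>
        ¬ ∀ (k : ℕ) (π ν : Fin k → Fin n), IsOptimal S z.1 z.2 π ν → inV ε z.1 z.2 π ν →
          c ≤ (N1gtCount z.1 z.2 π ν : ℝ) / (N1count z.1 z.2 π ν : ℝ))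
      (by
        rintro ⟨x, y⟩ hz
        have hz := (mem_filter.1 hz).2
        push Not at hz
        obtain ⟨k, π, ν, ⟨hπ, hν, _⟩, ⟨hV1, hV2⟩, hlt⟩ := hz
        -- when `N₁ = 0`, the quotient is `0` and the product inequality holds trivially
        have hN1 : (N1gtCount x y π ν : ℝ) ≤ c * (N1count x y π ν : ℝ) := by
          rcases Nat.eq_zero_or_pos (N1count x y π ν) with h0 | h0
          · have : N1gtCount x y π ν ≤ N1count x y π ν :=
              card_le_card (monotone_filter_right _ fun p _ h =>
                ⟨h.1, h.2.1, h.2.2.1, h.2.2.2.1, h.2.2.2.2.1, h.2.2.2.2.2.1⟩)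
            have h0' : N1gtCount x y π ν = 0 := by omega
            simp [h0, h0']
          · have h0' : (0 : ℝ) < N1count x y π ν := by exact_mod_cast h0
            exact ((div_lt_iff₀ h0').1 hlt).le
        obtain ⟨A, B, hA, hB, hw⟩ := exists_flip c lam hc0 hlam0.le x y π ν hπ hν hN1
        have hKn := numMatched_le x y π ν hπ
        have hKnR : (numMatched x y π ν : ℝ) ≤ n := by exact_mod_cast hKn
        have hKlow : (n : ℝ) / 4 ≤ numMatched x y π ν := by nlinarith
        have hKpos : 0 < numMatched x y π ν := by
          have : (0 : ℝ) < numMatched x y π ν := by linarith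
          exact_mod_cast this
        have hAB : (A.card + B.card : ℝ) ≤ ε * n / 2 := by
          rw [hA, hB]
          refine hV2.trans ?_
          gcongr
        have hcast : ((numMatched x y π ν - 1 : ℕ) : ℝ) = numMatched x y π ν - 1 := by
          rw [Nat.cast_sub hKpos, Nat.cast_one]
        refine ⟨numMatched x y π ν - 1, by omega, by rw [hcast]; linarith, A, B, hAB, ?_⟩
        rw [Nat.sub_add_cancel hKpos]
        refine le_trans (Real.exp_le_exp.2 ?_) hw
        exact neg_le_neg (mul_le_mul_of_nonneg_left hAB hlam0.le))
    have hexp : (lam + τ) * (ε * n / 2) + 2 * n * Real.exp (-τ) - δ * (n / 4 - 1) ≤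
        δ - 2 * (δ * n / 16) := by
      rw [hτe]
      nlinarith
    -- the polynomial prefactor costs half of the exponential rate
    have hpoly : ((n : ℝ) + 1) * Real.exp δ ≤ Real.exp (δ * n / 16) := by
      have hnN' : 1024 * Real.exp δ / δ ^ 2 ≤ n := by
        refine (Nat.le_ceil _).trans ?_
        have : ⌈1024 * Real.exp δ / δ ^ 2⌉₊ ≤ n := by omega
        exact_mod_cast this
      rw [div_le_iff₀ (by positivity)] at hnN'
      have hq := Real.quadratic_le_exp_of_nonneg (x := δ * n / 16) (by positivity)
      have h2 : 1024 * Real.exp δ * n ≤ n * δ ^ 2 * n := by gcongr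
      have h3 : ((n : ℝ) + 1) * Real.exp δ ≤ 2 * n * Real.exp δ := by gcongr; linarith
      have h4 : 0 ≤ δ * n / 16 := by positivity
      nlinarith
    have h4 : (0 : ℝ) < 4 ^ n := by positivity
    have hfin : ((n : ℝ) + 1) *
        Real.exp ((lam + τ) * (ε * n / 2) + 2 * n * Real.exp (-τ) - δ * (n / 4 - 1)) ≤
        Real.exp (-γ * n) := by
      calc _ ≤ ((n : ℝ) + 1) * Real.exp (δ - 2 * (δ * n / 16)) := by gcongr
        _ = ((n : ℝ) + 1) * Real.exp δ * Real.exp (-(2 * (δ * n / 16))) := by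
            rw [mul_assoc, ← Real.exp_add]; rfl
        _ ≤ Real.exp (δ * n / 16) * Real.exp (-(2 * (δ * n / 16))) := by gcongr
        _ = Real.exp (-(δ / 16) * n) := by rw [← Real.exp_add]; congr 1; ring
        _ ≤ _ := by
            gcongr
            exact min_le_left _ _
    refine sub_le_sub_left ?_ 1
    rw [div_le_iff₀ h4]
    refine hb.trans ?_
    rw [mul_comm]
    gcongr
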